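/- Let v > ε > 0 be constants and let f : ℝ → ℝ be continuous and bounded on [T,∞). Then there exists a unique bounded differentiable solution u : [T,∞) → ℝ of ∂_t u - (ε + v)·u = e^{-ε t}·u² + e^{(ε - v)t}·f(t) with lim_{t→∞} u(t) = 0, provided T is sufficiently large. -/

import Mathlib

namespace FuchsAux

open MeasureTheory Filter Topology

/-- The solution operator of the linear equation selecting the decaying solution. -/
noncomputable def P (a : ℝ) (G : ℝ → ℝ) (t : ℝ) : ℝ :=
  -Real.exp (a * t) * ∫ s in Set.Ioi t, Real.exp (-a * s) * G s

lemma integ {a : ℝ} (ha : 0 < a) {G : ℝ → ℝ} (hG : Continuous G) {B : ℝ}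
    (hB : ∀ s, |G s| ≤ B) (t : ℝ) :
    IntegrableOn (fun s => Real.exp (-a * s) * G s) (Set.Ioi t) := by
  have h1 : IntegrableOn (fun s => Real.exp (-a * s)) (Set.Ioi t) :=
    integrableOn_exp_mul_Ioi (by linarith) t
  refine Integrable.mul_bdd (c := B) h1 hG.aestronglyMeasurable ?_
  exact Eventually.of_forall hB

lemma P_bound {a : ℝ} (ha : 0 < a) {G : ℝ → ℝ} {C : ℝ} (t : ℝ)
    (hC : ∀ s, t ≤ s → |G s| ≤ C) : |P a G t| ≤ C / a := by
  have h1 : IntegrableOn (fun s => Real.exp (-a * s)) (Set.Ioi t) :=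
    integrableOn_exp_mul_Ioi (by linarith) t
  have h2 : ‖∫ s in Set.Ioi t, Real.exp (-a * s) * G s‖
      ≤ ∫ s in Set.Ioi t, Real.exp (-a * s) * C := by
    apply norm_integral_le_of_norm_le (h1.mul_const C)
    refine (ae_restrict_iff' measurableSet_Ioi).2 (Eventually.of_forall fun s hs => ?_)
    rw [norm_mul, Real.norm_eq_abs, Real.norm_eq_abs, Real.abs_exp]
    exact mul_le_mul_of_nonneg_left (hC s (le_of_lt hs)) (Real.exp_pos _).le
  rw [integral_mul_const, integral_exp_mul_Ioi (by linarith) t] at h2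
  unfold P
  rw [abs_mul, abs_neg, Real.abs_exp]
  calc _ ≤ Real.exp (a * t) * (-Real.exp (-a * t) / -a * C) :=
        mul_le_mul_of_nonneg_left h2 (Real.exp_pos _).le
    _ = (Real.exp (a * t) * Real.exp (-a * t)) * C / a := by
        field_simp
    _ = C / a := by
        rw [← Real.exp_add]; simp

lemma P_deriv {a : ℝ} (ha : 0 < a) {G : ℝ → ℝ} (hG : Continuous G) {B : ℝ}
    (hB : ∀ s, |G s| ≤ B) (t : ℝ) : HasDerivAt (P a G) (a * P a G t + G t) t := by
  set g : ℝ → ℝ := fun s => Real.exp (-a * s) * G s with hg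
  have hgc : Continuous g := by fun_prop
  have key : ∀ x, (∫ s in Set.Ioi x, g s) = (∫ s in Set.Ioi 0, g s) - ∫ s in (0:ℝ)..x, g s := by
    intro x
    have := intervalIntegral.integral_interval_add_Ioi (a := 0) (b := x)
      (integ ha hG hB 0) (integ ha hG hB x)
    linarith
  have hP : P a G = fun x => -Real.exp (a * x) *
      ((∫ s in Set.Ioi 0, g s) - ∫ s in (0:ℝ)..x, g s) := by
    funext x
    unfold P
    rw [← key x]
  have h1 : HasDerivAt (fun x => ∫ s in (0:ℝ)..x, g s) (g t) t :=
    intervalIntegral.integral_hasDerivAt_right (hgc.intervalIntegrable _ _)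
      (hgc.stronglyMeasurableAtFilter _ _) hgc.continuousAt
  have h2 : HasDerivAt (fun x : ℝ => -Real.exp (a * x)) (-(Real.exp (a * t) * (a * 1))) t :=
    (((hasDerivAt_id t).const_mul a).exp).neg
  have h3 := h2.mul (h1.const_sub (∫ s in Set.Ioi 0, g s))
  rw [hP]
  refine h3.congr_deriv ?_
  have : Real.exp (a * t) * Real.exp (-a * t) = 1 := by
    rw [← Real.exp_add]; simp
  simp only [hg]
  linear_combination (G t) * this

lemma P_sub {a : ℝ} (ha : 0 < a) {G H : ℝ → ℝ} (hG : Continuous G) (hH : Continuous H) {B C : ℝ}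
    (hB : ∀ s, |G s| ≤ B) (hC : ∀ s, |H s| ≤ C) (t : ℝ) :
    P a G t - P a H t = P a (fun s => G s - H s) t := by
  unfold P
  have : (∫ s in Set.Ioi t, Real.exp (-a * s) * (G s - H s))
      = (∫ s in Set.Ioi t, Real.exp (-a * s) * G s) - ∫ s in Set.Ioi t, Real.exp (-a * s) * H s := by
    rw [← integral_sub (integ ha hG hB t) (integ ha hH hC t)]
    congr 1; funext s; ring
  rw [this]; ring

/-- truncation to [-1,1] -/
noncomputable def cl (x : ℝ) : ℝ := max (-1) (min 1 x)

lemma cl_cont : Continuous cl := by unfold cl; fun_prop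

lemma cl_abs (x : ℝ) : |cl x| ≤ 1 := by
  unfold cl
  rw [abs_le]
  exact ⟨le_max_left _ _, max_le (by norm_num) (min_le_left _ _)⟩

lemma cl_sq (x : ℝ) : (cl x) ^ 2 ≤ 1 := by
  have := cl_abs x
  rw [← sq_abs]; nlinarith [abs_nonneg (cl x)]

lemma cl_eq {x : ℝ} (h : |x| ≤ 1) : cl x = x := by
  rw [abs_le] at h
  unfold cl
  rw [min_eq_right h.2, max_eq_right h.1]

lemma cl_lip (x y : ℝ) : |cl x - cl y| ≤ |x - y| := by
  unfold cl
  rw [max_comm, max_comm (-1 : ℝ) (min 1 y), min_comm, min_comm 1 y]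
  refine (abs_max_sub_max_le_max _ _ _ _).trans (max_le ?_ (by simp))
  refine (abs_min_sub_min_le_max _ _ _ _).trans (max_le le_rfl (by simp))

lemma cl_sq_lip (x y : ℝ) : |cl x ^ 2 - cl y ^ 2| ≤ 2 * |x - y| := by
  have h1 := cl_abs x
  have h2 := cl_abs y
  have h3 := cl_lip x y
  have : cl x ^ 2 - cl y ^ 2 = (cl x + cl y) * (cl x - cl y) := by ring
  rw [this, abs_mul]
  have h4 : |cl x + cl y| ≤ 2 := (abs_add_le _ _).trans (by linarith)
  exact mul_le_mul h4 h3 (abs_nonneg _) (by norm_num)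

lemma existence {a : ℝ} (ha : 0 < a) {α β : ℝ → ℝ} (hα : Continuous α) (hβ : Continuous β)
    (hα0 : ∀ s, |α s| ≤ a / 4) (hβ0 : ∀ s, |β s| ≤ a / 4)
    (hαt : Tendsto α atTop (𝓝 0)) (hβt : Tendsto β atTop (𝓝 0)) :
    ∃ u : ℝ → ℝ, (∀ t, HasDerivAt u (a * u t + (α t * u t ^ 2 + β t)) t) ∧
      (∀ t, |u t| ≤ 1) ∧ Tendsto u atTop (𝓝 0) := by
  let G : (ℝ → ℝ) → ℝ → ℝ := fun u s => α s * cl (u s) ^ 2 + β s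
  have hGa : ∀ u s, |G u s| ≤ |α s| + |β s| := by
    intro u s
    refine (abs_add_le _ _).trans ?_
    rw [abs_mul, abs_of_nonneg (sq_nonneg (cl (u s)))]
    have := mul_le_mul_of_nonneg_left (cl_sq (u s)) (abs_nonneg (α s))
    linarith
  have hGb : ∀ u s, |G u s| ≤ a / 2 := fun u s => by
    linarith [hGa u s, hα0 s, hβ0 s]
  have hGc : ∀ u, Continuous u → Continuous (G u) := by
    intro u hu
    have := cl_cont.comp hu
    exact (hα.mul (this.pow 2)).add hβ
  have hPc : ∀ u, Continuous u → Continuous (P a (G u)) := fun u hu =>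
    continuous_iff_continuousAt.2 fun t => (P_deriv ha (hGc u hu) (hGb u) t).continuousAt
  have hPb : ∀ u t, |P a (G u) t| ≤ 1 / 2 := by
    intro u t
    refine (P_bound ha t (fun s _ => hGb u s)).trans (le_of_eq ?_)
    field_simp
  let Φ : BoundedContinuousFunction ℝ ℝ → BoundedContinuousFunction ℝ ℝ := fun u =>
    BoundedContinuousFunction.ofNormedAddCommGroup (P a (G u)) (hPc u u.continuous) (1 / 2) (hPb u)
  have hΦ : ContractingWith (1 / 2) Φ := by
    refine ⟨by rw [← NNReal.coe_lt_coe]; norm_num, LipschitzWith.of_dist_le_mul fun u w => ?_⟩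
    rw [BoundedContinuousFunction.dist_le (by positivity)]
    intro t
    change |P a (G u) t - P a (G w) t| ≤ _
    rw [P_sub ha (hGc u u.continuous) (hGc w w.continuous) (hGb u) (hGb w)]
    refine (P_bound (C := a / 4 * (2 * dist u w)) ha t (fun s _ => ?_)).trans (le_of_eq ?_)
    · have : G u s - G w s = α s * (cl (u s) ^ 2 - cl (w s) ^ 2) := by simp only [G]; ring
      rw [this, abs_mul]
      have hd : |u s - w s| ≤ dist u w := by
        rw [← Real.dist_eq]; exact BoundedContinuousFunction.dist_coe_le_dist s
      exact mul_le_mul (hα0 s) ((cl_sq_lip _ _).trans (by linarith)) (abs_nonneg _) (by positivity)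
    · push_cast
      field_simp
      norm_num
  obtain ⟨u, hu⟩ : ∃ u, Φ u = u := ⟨_, hΦ.fixedPoint_isFixedPt⟩
  have hu' : ∀ t, P a (G u) t = u t := fun t => by
    conv_rhs => rw [← hu]
    rfl
  have hu1 : ∀ t, |u t| ≤ 1 := fun t => by
    rw [← hu' t]; linarith [hPb u t]
  refine ⟨u, fun t => ?_, hu1, ?_⟩
  · have := P_deriv ha (hGc u u.continuous) (hGb u) t
    rw [show P a (G u) = u from funext hu'] at this
    simpa only [G, cl_eq (hu1 t)] using this
  · rw [Metric.tendsto_atTop]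
    intro δ hδ
    obtain ⟨N₁, h₁⟩ := Metric.tendsto_atTop.1 hαt (a * δ / 4) (by positivity)
    obtain ⟨N₂, h₂⟩ := Metric.tendsto_atTop.1 hβt (a * δ / 4) (by positivity)
    refine ⟨max N₁ N₂, fun t ht => ?_⟩
    rw [Real.dist_eq, sub_zero, ← hu' t]
    refine (P_bound (C := a * δ / 2) ha t fun s hs => ?_).trans_lt ?_
    · have e1 := h₁ s (((le_max_left _ _).trans ht).trans hs)
      have e2 := h₂ s (((le_max_right _ _).trans ht).trans hs)
      rw [Real.dist_eq, sub_zero] at e1 e2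
      linarith [hGa u s]
    · have : a * δ / 2 / a = δ / 2 := by field_simp
      rw [this]; linarith

lemma uniq {w h : ℝ → ℝ} {S H : ℝ} (hw : ∀ t ≥ S, HasDerivAt w (h t * w t) t)
    (hH : ∀ t ≥ S, |h t| ≤ H) (hpos : ∀ᶠ t in atTop, 0 ≤ h t)
    (hlim : Tendsto w atTop (𝓝 0)) : ∀ t ≥ S, w t = 0 := by
  obtain ⟨N, hN⟩ := eventually_atTop.1 hpos
  have hmono : ∀ (c R : ℝ), S ≤ R → (∀ t ≥ R, 0 ≤ h t + c) →
      MonotoneOn (fun t => w t ^ 2 * Real.exp (2 * c * t)) (Set.Ici R) := by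
    intro c R hR hc
    have hd : ∀ t ≥ R, HasDerivAt (fun t => w t ^ 2 * Real.exp (2 * c * t))
        (2 * (h t + c) * (w t ^ 2 * Real.exp (2 * c * t))) t := by
      intro t ht
      have h1 := ((hw t (hR.trans ht)).pow 2).mul (((hasDerivAt_id t).const_mul (2 * c)).exp)
      refine h1.congr_deriv ?_
      simp
      ring
    refine monotoneOn_of_deriv_nonneg (convex_Ici R)
      (fun t ht => (hd t ht).continuousAt.continuousWithinAt)
      (fun t ht => (hd t (interior_subset ht)).differentiableAt.differentiableWithinAt) ?_
    intro t ht
    have ht' : t ≥ R := interior_subset ht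
    rw [(hd t ht').deriv]
    have := hc t ht'
    positivity
  have hz : ∀ t ≥ max S N, w t = 0 := by
    intro t ht
    have hm := hmono 0 (max S N) (le_max_left _ _)
      (fun t ht => by simpa using hN t ((le_max_right _ _).trans ht))
    have : w t ^ 2 ≤ 0 := by
      have hl : Tendsto (fun t => w t ^ 2) atTop (𝓝 0) := by simpa using hlim.pow 2
      refine ge_of_tendsto hl ?_
      filter_upwards [eventually_ge_atTop t] with s hs
      simpa using hm ht (ht.trans hs) hs
    exact pow_eq_zero_iff (two_ne_zero) |>.1 (le_antisymm this (sq_nonneg _))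
  intro t ht
  have hm := hmono H S le_rfl (fun t ht => by linarith [neg_abs_le (h t), hH t ht])
  have hle := hm (a := t) (b := max t (max S N)) ht (ht.trans (le_max_left _ _)) (le_max_left _ _)
  simp only [hz _ (le_max_right t (max S N))] at hle
  have h0 : w t ^ 2 ≤ 0 := by
    by_contra hc
    push Not at hc
    have := mul_pos hc (Real.exp_pos (2 * H * t))
    simp at hle
    linarith
  exact pow_eq_zero_iff (two_ne_zero) |>.1 (le_antisymm h0 (sq_nonneg _))

lemma exp_lim {c : ℝ} (hc : c < 0) : Tendsto (fun t : ℝ => Real.exp (c * t)) atTop (𝓝 0) :=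
  Real.tendsto_exp_atBot.comp (tendsto_id.const_mul_atTop_of_neg hc)

end FuchsAux

/-- the trace-part Fuchsian equation
∂_t u - (ε+v)u = e^{-εt}u² + e^{(ε-v)t}f has, for T sufficiently large, a unique
bounded differentiable solution on [T₀,∞) tending to 0 at t → ∞. -/
theorem fuchsian_trace_k_existence_uniqueness
    (ε v T : ℝ) (hε : 0 < ε) (hv : ε < v)
    (f : ℝ → ℝ) (hf : ContinuousOn f (Set.Ici T))
    (K : ℝ) (hK : ∀ t ≥ T, |f t| ≤ K) :
    ∃ T₀ ≥ T,
      (∃ u : ℝ → ℝ,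
        (∀ t ≥ T₀, DifferentiableAt ℝ u t) ∧
        (∃ M : ℝ, ∀ t ≥ T₀, |u t| ≤ M) ∧
        (∀ t ≥ T₀, deriv u t - (ε + v) * u t
            = Real.exp (-ε * t) * (u t) ^ 2 + Real.exp ((ε - v) * t) * f t) ∧
        Filter.Tendsto u Filter.atTop (nhds 0)) ∧
      (∀ u₁ u₂ : ℝ → ℝ,
        ((∀ t ≥ T₀, DifferentiableAt ℝ u₁ t) ∧
         (∃ M : ℝ, ∀ t ≥ T₀, |u₁ t| ≤ M) ∧
         (∀ t ≥ T₀, deriv u₁ t - (ε + v) * u₁ t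
             = Real.exp (-ε * t) * (u₁ t) ^ 2 + Real.exp ((ε - v) * t) * f t) ∧
         Filter.Tendsto u₁ Filter.atTop (nhds 0)) →
        ((∀ t ≥ T₀, DifferentiableAt ℝ u₂ t) ∧
         (∃ M : ℝ, ∀ t ≥ T₀, |u₂ t| ≤ M) ∧
         (∀ t ≥ T₀, deriv u₂ t - (ε + v) * u₂ t
             = Real.exp (-ε * t) * (u₂ t) ^ 2 + Real.exp ((ε - v) * t) * f t) ∧
         Filter.Tendsto u₂ Filter.atTop (nhds 0)) →
        Set.EqOn u₁ u₂ (Set.Ici T₀)) := by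
  have hK0 : 0 ≤ K := (abs_nonneg _).trans (hK T le_rfl)
  have ha : 0 < ε + v := by linarith
  have hl1 := FuchsAux.exp_lim (c := -ε) (by linarith)
  have hl2 := FuchsAux.exp_lim (c := ε - v) (by linarith)
  have hl3 : Filter.Tendsto (fun t : ℝ => Real.exp ((ε - v) * t) * K) Filter.atTop (nhds 0) := by
    simpa using hl2.mul_const K
  obtain ⟨S, hST, hS1, hS2⟩ := ((Filter.eventually_ge_atTop T).and
    ((hl1.eventually_le_const (show (0:ℝ) < (ε + v) / 4 by linarith)).and
      (hl3.eventually_le_const (show (0:ℝ) < (ε + v) / 4 by linarith)))).exists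
  refine ⟨S, hST, ?_, ?_⟩
  · let α : ℝ → ℝ := fun s => Real.exp (-ε * max s S)
    let β : ℝ → ℝ := fun s => Real.exp ((ε - v) * max s S) * f (max s S)
    have hαc : Continuous α := by fun_prop
    have hfc : Continuous (fun s => f (max s S)) :=
      hf.comp_continuous (by fun_prop) (fun s => le_trans hST (le_max_right s S))
    have hβc : Continuous β := by
      have : Continuous (fun s : ℝ => Real.exp ((ε - v) * max s S)) := by fun_prop
      exact this.mul hfc
    have hβK : ∀ s, |β s| ≤ Real.exp ((ε - v) * max s S) * K := by
      intro s
      simp only [β]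
      rw [abs_mul, Real.abs_exp]
      exact mul_le_mul_of_nonneg_left (hK _ (le_trans hST (le_max_right s S))) (Real.exp_pos _).le
    have hα0 : ∀ s, |α s| ≤ (ε + v) / 4 := by
      intro s
      simp only [α]
      rw [Real.abs_exp]
      refine le_trans (Real.exp_le_exp.2 ?_) hS1
      nlinarith [le_max_right s S]
    have hβ0 : ∀ s, |β s| ≤ (ε + v) / 4 := by
      intro s
      refine (hβK s).trans (le_trans (mul_le_mul_of_nonneg_right (Real.exp_le_exp.2 ?_) hK0) hS2)
      nlinarith [le_max_right s S]
    have hmax : Filter.Tendsto (fun s => max s S) Filter.atTop Filter.atTop :=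
      Filter.tendsto_atTop_mono (fun s => le_max_left s S) Filter.tendsto_id
    have hαt : Filter.Tendsto α Filter.atTop (nhds 0) := hl1.comp hmax
    have hβt : Filter.Tendsto β Filter.atTop (nhds 0) :=
      squeeze_zero_norm hβK (hl3.comp hmax)
    obtain ⟨u, hu1, hu2, hu3⟩ := FuchsAux.existence ha hαc hβc hα0 hβ0 hαt hβt
    refine ⟨u, fun t _ => (hu1 t).differentiableAt, ⟨1, fun t _ => hu2 t⟩, fun t ht => ?_, hu3⟩
    rw [(hu1 t).deriv]
    simp only [α, β, max_eq_left ht]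
    ring
  · rintro u₁ u₂ ⟨hd1, ⟨M1, hM1⟩, he1, ht1⟩ ⟨hd2, ⟨M2, hM2⟩, he2, ht2⟩ t ht
    have hw := FuchsAux.uniq (w := fun t => u₁ t - u₂ t)
      (h := fun t => (ε + v) + Real.exp (-ε * t) * (u₁ t + u₂ t)) (S := S)
      (H := (ε + v) + Real.exp (-ε * S) * (M1 + M2)) ?_ ?_ ?_ ?_ t ht
    · simpa [sub_eq_zero] using hw
    · intro t ht
      refine ((hd1 t ht).hasDerivAt.sub (hd2 t ht).hasDerivAt).congr_deriv ?_
      linear_combination he1 t ht - he2 t ht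
    · intro t ht
      refine (abs_add_le _ _).trans ?_
      rw [abs_of_pos ha, abs_mul, Real.abs_exp]
      have e1 : Real.exp (-ε * t) ≤ Real.exp (-ε * S) := Real.exp_le_exp.2 (by nlinarith)
      have e2 : |u₁ t + u₂ t| ≤ M1 + M2 :=
        (abs_add_le _ _).trans (add_le_add (hM1 t ht) (hM2 t ht))
      have := mul_le_mul e1 e2 (abs_nonneg _) (Real.exp_pos _).le
      linarith
    · have : Filter.Tendsto (fun t => (ε + v) + Real.exp (-ε * t) * (u₁ t + u₂ t))
          Filter.atTop (nhds (ε + v)) := by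
        simpa using (hl1.mul (ht1.add ht2)).const_add (ε + v)
      exact this.eventually_const_le ha
    · simpa using ht1.sub ht2
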